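/- If the preference lists of a matching problem do not possess a cycle, then the matching problem has exactly one stable matching. -/

import Mathlib

/-- `(w,f)` blocks the matching `μ`: `f ≻_w μ(w)` and `w ≻_f μ⁻¹(f)`.
`prefW w f f'` means worker `w` strictly prefers firm `f` to firm `f'`;
`prefF f w w'` means firm `f` strictly prefers worker `w` to worker `w'`. -/
def Blocks {W F : Type*} (prefW : W → F → F → Prop) (prefF : F → W → W → Prop)
    (μ : W ≃ F) (w : W) (f : F) : Prop :=
  prefW w f (μ w) ∧ prefF f w (μ.symm f)

/-- A matching is stable if no pair blocks it. -/
def IsStableMatching {W F : Type*} (prefW : W → F → F → Prop)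
    (prefF : F → W → W → Prop) (μ : W ≃ F) : Prop :=
  ∀ w f, ¬ Blocks prefW prefF μ w f

/-- A pair `(w,f)` is unattractive in `S`. -/
def Unattractive {W F : Type*} (prefW : W → F → F → Prop) (prefF : F → W → W → Prop)
    (S : Set (W × F)) (w : W) (f : F) : Prop :=
  (∃ f', (w, f') ∈ S ∧ prefW w f' f ∧
      ∀ w', w' ≠ w → (w', f') ∈ S → prefF f' w w') ∨
  (∃ w', (w', f) ∈ S ∧ prefF f w' w ∧
      ∀ f'', f'' ≠ f → (w', f'') ∈ S → prefW w' f f'')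

/-- `delta S` is `S` with all pairs unattractive in `S` removed. -/
def delta {W F : Type*} (prefW : W → F → F → Prop) (prefF : F → W → W → Prop)
    (S : Set (W × F)) : Set (W × F) :=
  {p ∈ S | ¬ Unattractive prefW prefF S p.1 p.2}

/-- The normal form: the fixed point of `delta` reached by iterating from `W × F`.
Since `delta S ⊆ S` and `W × F` is finite, `Fintype.card (W × F)` iterations suffice. -/
def NormalForm (W F : Type*) [Fintype W] [Fintype F]
    (prefW : W → F → F → Prop) (prefF : F → W → W → Prop) : Set (W × F) :=
  (delta prefW prefF)^[Fintype.card (W × F)] Set.univ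

/-- `μ` is `S`-stable: `S`-admissible and no pair of `S` blocks it within `S`. -/
def SStable {W F : Type*} (prefW : W → F → F → Prop) (prefF : F → W → W → Prop)
    (S : Set (W × F)) (μ : W ≃ F) : Prop :=
  (∀ w, (w, μ w) ∈ S) ∧
  ∀ w f, (w, f) ∈ S → ¬ (prefW w f (μ w) ∧ prefF f w (μ.symm f))

/-- Arcs of the matching digraph `D(S)`: from `(w,f)` to `(w,f')` whenever `f' ≻_w f`,
and from `(w,f)` to `(w',f)` whenever `w' ≻_f w`. -/
def Arc {W F : Type*} (prefW : W → F → F → Prop) (prefF : F → W → W → Prop)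
    (S : Set (W × F)) (p q : W × F) : Prop :=
  p ∈ S ∧ q ∈ S ∧
    ((p.1 = q.1 ∧ prefW p.1 q.2 p.2) ∨ (p.2 = q.2 ∧ prefF p.2 q.1 p.1))

/-- `D(S)` contains a directed cycle: distinct vertices `c 0, …, c (n-1)` with `n ≥ 1`,
`c n = c 0`, and an arc from each vertex to the next. -/
def HasDirectedCycle {W F : Type*} (prefW : W → F → F → Prop)
    (prefF : F → W → W → Prop) (S : Set (W × F)) : Prop :=
  ∃ (n : ℕ) (c : Fin (n + 1) → W × F), 0 < n ∧
    Function.Injective (fun i : Fin n => c i.castSucc) ∧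
    c (Fin.last n) = c 0 ∧
    ∀ i : Fin n, Arc prefW prefF S (c i.castSucc) (c i.succ)

/-- The preference lists possess a cycle: there are `k ≥ 2`, distinct workers
`w_1, …, w_k` and distinct firms `f_1, …, f_k` (indexed by `ZMod k`) with
`f_{j+1} ≻_{w_j} f_j` and `w_j ≻_{f_j} w_{j-1}` for all `j`, indices modulo `k`. -/
def PrefCycle {W F : Type*} (prefW : W → F → F → Prop)
    (prefF : F → W → W → Prop) : Prop :=
  ∃ k : ℕ, 2 ≤ k ∧ ∃ (ws : ZMod k → W) (fs : ZMod k → F),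
    Function.Injective ws ∧ Function.Injective fs ∧
    ∀ j : ZMod k, prefW (ws j) (fs (j + 1)) (fs j) ∧ prefF (fs j) (ws j) (ws (j - 1))

/-- A nonempty subset of a finite strict total order has a most preferred element. -/
theorem exists_most_preferred {α : Type*} [Finite α] (r : α → α → Prop)
    [IsStrictTotalOrder α r] {B : Set α} (hB : B.Nonempty) :
    ∃ f ∈ B, ∀ b ∈ B, b ≠ f → r f b := by
  obtain ⟨f, hf, hmin⟩ := (Finite.wellFounded_of_trans_of_irrefl r).has_min B hB
  refine ⟨f, hf, fun b hb hne => ?_⟩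
  rcases trichotomous_of r f b with h | h | h
  · exact h
  · exact absurd h.symm hne
  · exact absurd h (hmin b hb)

/-- Every self-map of a nonempty finite type has a periodic point. -/
theorem exists_mem_periodicPts {α : Type*} [Finite α] [Nonempty α] (T : α → α) :
    ∃ x, x ∈ Function.periodicPts T := by
  obtain ⟨x₀⟩ := ‹Nonempty α›
  obtain ⟨i, j, hne, heq⟩ := Finite.exists_ne_map_eq_of_infinite (fun i : ℕ => T^[i] x₀)
  wlog hij : i < j generalizing i j
  · exact this j i hne.symm heq.symm (by omega)
  refine ⟨T^[i] x₀, j - i, by omega, ?_⟩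
  rw [Function.IsPeriodicPt, Function.IsFixedPt, ← Function.iterate_add_apply,
    Nat.sub_add_cancel hij.le]
  exact heq.symm

/-- With acyclic preferences, any nonempty sets of workers and firms contain a worker and a firm
that are each other's favourite. -/
theorem exists_mutual_favourites {W F : Type*} [Finite W] [Finite F]
    {prefW : W → F → F → Prop} {prefF : F → W → W → Prop}
    (hW : ∀ w, IsStrictTotalOrder F (prefW w)) (hF : ∀ f, IsStrictTotalOrder W (prefF f))
    (hacyc : ¬ PrefCycle prefW prefF) {A : Set W} {B : Set F}
    (hA : A.Nonempty) (hB : B.Nonempty) :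
    ∃ w ∈ A, ∃ f ∈ B, (∀ b ∈ B, b ≠ f → prefW w f b) ∧ ∀ a ∈ A, a ≠ w → prefF f w a := by
  choose g hgB hg using fun w => exists_most_preferred (prefW w) hB
  choose h hhA hh using fun f => exists_most_preferred (prefF f) hA
  have : Nonempty W := ⟨hA.choose⟩
  obtain ⟨x, hx⟩ := exists_mem_periodicPts (h ∘ g)
  have hpos := Function.minimalPeriod_pos_of_mem_periodicPts hx
  by_cases hone : Function.minimalPeriod (h ∘ g) x = 1
  · have hfix : h (g x) = x := Function.minimalPeriod_eq_one_iff_isFixedPt.1 hone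
    have hxA := hhA (g x)
    have hx' := hh (g x)
    rw [hfix] at hxA hx'
    exact ⟨x, hxA, g x, hgB x, hg x, hx'⟩
  · refine absurd ?_ hacyc
    generalize hk : Function.minimalPeriod (h ∘ g) x = k at hpos hone
    have hk2 : 2 ≤ k := by omega
    have : Fact (1 < k) := ⟨hk2⟩
    have : NeZero k := ⟨hpos.ne'⟩
    let ws : ZMod k → W := fun j => (h ∘ g)^[j.val] x
    have ws_succ (j : ZMod k) : h (g (ws j)) = ws (j + 1) := by
      have hmod := Function.iterate_mod_minimalPeriod_eq (f := h ∘ g) (x := x) (n := j.val + 1)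
      rw [hk, Function.iterate_succ_apply'] at hmod
      simpa [ws, ZMod.val_add, ZMod.val_one] using hmod.symm
    have ws_pred (j : ZMod k) : h (g (ws (j - 1))) = ws j := by
      rw [ws_succ, sub_add_cancel]
    have ws_inj : Function.Injective ws := fun i j hij =>
      ZMod.val_injective k <| Function.iterate_injOn_Iio_minimalPeriod (f := h ∘ g) (x := x)
        (by simpa [hk] using i.val_lt) (by simpa [hk] using j.val_lt) hij
    have fs_inj : Function.Injective fun j => g (ws (j - 1)) := fun i j hij =>
      ws_inj (by rw [← ws_pred i, ← ws_pred j]; exact congrArg h hij)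
    refine ⟨k, hk2, ws, fun j => g (ws (j - 1)), ws_inj, fs_inj, fun j => ⟨?_, ?_⟩⟩
    · have hne : g (ws (j - 1)) ≠ g (ws j) := fun he => by
        have := ws_inj ((ws_pred j).symm.trans ((congrArg h he).trans (ws_succ j)))
        simp at this
      simpa using hg (ws j) _ (hgB _) hne
    · have hne : ws (j - 1) ≠ ws j := fun he => by
        have := ws_inj he
        simp at this
      have hmem : ws (j - 1) ∈ A := by
        rw [← ws_pred (j - 1)]
        exact hhA _
      have := hh (g (ws (j - 1))) _ hmem
      rw [ws_pred] at this
      exact this hne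

/-- `C` is settled by `μ`: no worker in `C` and no partner of a worker in `C` prefers anyone
outside `C` and its partners, and `μ` has no blocking pair inside `C` and its partners. -/
def IsSettled {W F : Type*} (prefW : W → F → F → Prop) (prefF : F → W → W → Prop)
    (μ : W ≃ F) (C : Finset W) : Prop :=
  (∀ a ∈ C, ∀ m, prefW a (μ m) (μ a) → m ∈ C) ∧
  (∀ m ∈ C, ∀ a, prefF (μ m) a m → a ∈ C) ∧
  ∀ a ∈ C, ∀ m ∈ C, ¬ (prefW a (μ m) (μ a) ∧ prefF (μ m) a m)

/-- With acyclic preferences, a settled set that misses a worker can be enlarged by one worker. -/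
theorem IsSettled.exists_insert {W F : Type*} [Finite W] [Finite F] [DecidableEq W]
    {prefW : W → F → F → Prop} {prefF : F → W → W → Prop}
    (hW : ∀ w, IsStrictTotalOrder F (prefW w)) (hF : ∀ f, IsStrictTotalOrder W (prefF f))
    (hacyc : ¬ PrefCycle prefW prefF) {μ : W ≃ F} {C : Finset W}
    (hC : IsSettled prefW prefF μ C) (hne : ∃ w, w ∉ C) :
    ∃ (ν : W ≃ F) (w : W), w ∉ C ∧ IsSettled prefW prefF ν (insert w C) := by
  have irreflW (w f) : ¬ prefW w f f := irrefl_of (prefW w) f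
  have asymmW (w f f') : prefW w f f' → ¬ prefW w f' f := asymm_of (prefW w)
  have asymmF (f w w') : prefF f w w' → ¬ prefF f w' w := asymm_of (prefF f)
  obtain ⟨w₀, hw₀⟩ := hne
  obtain ⟨w, hw, f, hf, hwf, hfw⟩ := exists_mutual_favourites hW hF hacyc
    (A := {w | w ∉ C}) (B := {f | μ.symm f ∉ C}) ⟨w₀, hw₀⟩ ⟨μ w₀, by simpa using hw₀⟩
  obtain ⟨v, rfl⟩ := μ.surjective f
  simp only [Set.mem_ofPred_eq, Equiv.symm_apply_apply] at hw hf hwf hfw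
  let ν : W ≃ F := (Equiv.swap w v).trans μ
  have hνw : ν w = μ v := by simp [ν]
  have hνC (a) (ha : a ∈ C) : ν a = μ a := by
    have h1 : a ≠ w := by rintro rfl; exact hw ha
    have h2 : a ≠ v := by rintro rfl; exact hf ha
    simp [ν, Equiv.swap_apply_of_ne_of_ne h1 h2]
  have hνnC (a) (ha : a ∉ C) : μ.symm (ν a) ∉ C := fun h => by
    have h' := hνC _ h
    rw [Equiv.apply_symm_apply] at h'
    exact ha (ν.injective h' ▸ h)
  obtain ⟨h1, h2, h3⟩ := hC
  have leaveW (a) (ha : a ∈ C) (m) (h : prefW a (ν m) (ν a)) : m ∈ C := by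
    by_contra hm
    rw [hνC a ha] at h
    exact hνnC m hm (h1 a ha _ (by simpa using h))
  have leaveF (m) (hm : m ∈ C) (a) (h : prefF (ν m) a m) : a ∈ C :=
    h2 m hm a (hνC m hm ▸ h)
  have topW (m) (h : prefW w (ν m) (ν w)) : m ∈ C := by
    by_contra hm
    rw [hνw] at h
    by_cases he : ν m = μ v
    · exact irreflW _ _ (he ▸ h)
    · exact asymmW _ _ _ h (hwf _ (hνnC m hm) he)
  have topF (a) (h : prefF (ν w) a w) : a ∈ C := by
    by_contra ha
    rw [hνw] at h
    by_cases he : a = w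
    · subst he; exact asymmF _ _ _ h h
    · exact asymmF _ _ _ h (hfw a ha he)
  refine ⟨ν, w, hw, ?_, ?_, ?_⟩
  · intro a ha m h
    rcases Finset.mem_insert.1 ha with rfl | ha
    · exact Finset.mem_insert_of_mem (topW m h)
    · exact Finset.mem_insert_of_mem (leaveW a ha m h)
  · intro m hm a h
    rcases Finset.mem_insert.1 hm with rfl | hm
    · exact Finset.mem_insert_of_mem (topF a h)
    · exact Finset.mem_insert_of_mem (leaveF m hm a h)
  · rintro a ha m hm ⟨hp, hq⟩
    have haC : a ∈ C := by
      rcases Finset.mem_insert.1 hm with rfl | hm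
      · exact topF a hq
      · exact leaveF m hm a hq
    have hmC : m ∈ C := leaveW a haC m hp
    rw [hνC m hmC, hνC a haC] at hp
    rw [hνC m hmC] at hq
    exact h3 a haC m hmC ⟨hp, hq⟩

/-- Acyclic preference lists admit a stable matching. -/
theorem exists_stable_of_acyclic {W F : Type*} [Fintype W] [Fintype F]
    (hcard : Fintype.card W = Fintype.card F)
    {prefW : W → F → F → Prop} {prefF : F → W → W → Prop}
    (hW : ∀ w, IsStrictTotalOrder F (prefW w)) (hF : ∀ f, IsStrictTotalOrder W (prefF f))
    (hacyc : ¬ PrefCycle prefW prefF) : ∃ μ : W ≃ F, IsStableMatching prefW prefF μ := by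
  classical
  have settle (n : ℕ) (hn : n ≤ Fintype.card W) :
      ∃ (μ : W ≃ F) (C : Finset W), C.card = n ∧ IsSettled prefW prefF μ C := by
    induction n with
    | zero => exact ⟨Fintype.equivOfCardEq hcard, ∅, by simp [IsSettled]⟩
    | succ n ih =>
      obtain ⟨μ, C, hCn, hC⟩ := ih (by omega)
      have hne : ∃ w, w ∉ C := by
        by_contra! h
        have := Finset.card_eq_iff_eq_univ C |>.2 (Finset.eq_univ_iff_forall.2 h)
        omega
      obtain ⟨ν, w, hw, hν⟩ := hC.exists_insert hW hF hacyc hne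
      exact ⟨ν, insert w C, by rw [Finset.card_insert_of_notMem hw, hCn], hν⟩
  obtain ⟨μ, C, hCn, -, -, hC⟩ := settle _ le_rfl
  rw [Finset.card_eq_iff_eq_univ] at hCn
  subst hCn
  refine ⟨μ, fun w f ⟨hp, hq⟩ => hC w (Finset.mem_univ _) (μ.symm f) (Finset.mem_univ _) ?_⟩
  simpa using And.intro hp hq

/-- If `(w, f)` are mutual favourites among sets matched to each other by a stable matching, then
they are partners. -/
theorem IsStableMatching.apply_eq_of_mutual_favourites {W F : Type*}
    {prefW : W → F → F → Prop} {prefF : F → W → W → Prop} {μ : W ≃ F}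
    (hμ : IsStableMatching prefW prefF μ) {A : Set W} {B : Set F}
    (hAB : ∀ a, μ a ∈ B ↔ a ∈ A) {w : W} {f : F} (hw : w ∈ A) (hf : f ∈ B)
    (hwf : ∀ b ∈ B, b ≠ f → prefW w f b) (hfw : ∀ a ∈ A, a ≠ w → prefF f w a) : μ w = f := by
  by_contra hne
  refine hμ w f ⟨hwf _ ((hAB w).2 hw) hne, hfw _ ((hAB _).1 (by simpa using hf)) fun he => ?_⟩
  exact hne (by rw [← he, Equiv.apply_symm_apply])

/-- Acyclic preference lists admit at most one stable matching. -/
theorem stable_unique_of_acyclic {W F : Type*} [Finite W] [Finite F]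
    {prefW : W → F → F → Prop} {prefF : F → W → W → Prop}
    (hW : ∀ w, IsStrictTotalOrder F (prefW w)) (hF : ∀ f, IsStrictTotalOrder W (prefF f))
    (hacyc : ¬ PrefCycle prefW prefF) {μ ν : W ≃ F}
    (hμ : IsStableMatching prefW prefF μ) (hν : IsStableMatching prefW prefF ν) : μ = ν := by
  by_contra hne
  obtain ⟨w₀, hw₀⟩ : ∃ w, μ w ≠ ν w := by
    by_contra! h
    exact hne (Equiv.ext h)
  have hAμ (a) : μ a ∈ {f | μ.symm f ≠ ν.symm f} ↔ a ∈ {w | μ w ≠ ν w} := by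
    simp [Equiv.eq_symm_apply, eq_comm]
  have hAν (a) : ν a ∈ {f | μ.symm f ≠ ν.symm f} ↔ a ∈ {w | μ w ≠ ν w} := by
    simp [Equiv.symm_apply_eq, eq_comm]
  obtain ⟨w, hw, f, hf, hwf, hfw⟩ := exists_mutual_favourites hW hF hacyc
    (A := {w | μ w ≠ ν w}) (B := {f | μ.symm f ≠ ν.symm f}) ⟨w₀, hw₀⟩ ⟨μ w₀, (hAμ w₀).2 hw₀⟩
  exact hw ((hμ.apply_eq_of_mutual_favourites hAμ hw hf hwf hfw).trans
    (hν.apply_eq_of_mutual_favourites hAν hw hf hwf hfw).symm)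

/-- Acyclic preference lists imply a unique stable matching. -/
theorem unique_stable_of_acyclic {W F : Type*} [Fintype W] [Fintype F] [Nonempty W]
    (hcard : Fintype.card W = Fintype.card F)
    (prefW : W → F → F → Prop) (prefF : F → W → W → Prop)
    (hW : ∀ w, IsStrictTotalOrder F (prefW w))
    (hF : ∀ f, IsStrictTotalOrder W (prefF f))
    (hacyc : ¬ PrefCycle prefW prefF) :
    ∃! μ : W ≃ F, IsStableMatching prefW prefF μ := by
  obtain ⟨μ, hμ⟩ := exists_stable_of_acyclic hcard hW hF hacyc
  exact ⟨μ, hμ, fun ν hν => stable_unique_of_acyclic hW hF hacyc hν hμ⟩
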